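/- Let E = (r_1, …, r_n) be a finite sequence of rows with all entries integers whose B-coordinates are nondecreasing (B_1 ≤ B_2 ≤ … ≤ B_n), and suppose for some index i that h_1 := r_i = (A, −B, B, η) and h_2 := r_{i+1} = (A', −B', B', η') are consecutive hats with B' ≥ 0, C(h_1) ≥ 1, C(h_2) ≥ 1, satisfying A' = B − 1 and η' = (−1)^{C(h_1)} η (the alternating sign condition). Then: (a) in dual(E), the rows r̂_{i+1} and r̂_i are consecutive (in that order) rows with l = 0 and supports [B', A'] and [B, A] respectively, and the union-intersection of type 3' is applicable to this pair; (b) applying this union-intersection to dual(E) and then taking the dual of the resulting sequence yields exactly the sequence obtained from E by replacing the pair (h_1, h_2) with the single hat h = (A, −B', B', η), with every other row of E unchanged. -/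

import Mathlib

/-- A row `r = (A, B, l, η)`: the data of an extended segment `([A, B], l, η)`
(with the constraints `B ≤ A` and `η ∈ {1, -1}` imposed as hypotheses via
`IsRow`). All entries are integers. -/
structure Row where
  A : ℤ
  B : ℤ
  l : ℤ
  eta : ℤ
deriving DecidableEq

instance : Inhabited Row := ⟨⟨0, 0, 0, 1⟩⟩

/-- `(-1)^n` for an integer `n` (only the parity of `n` matters). -/
def epow (n : ℤ) : ℤ := (-1) ^ n.natAbs

/-- `a(r) = A + B + 1`. -/
def Row.a (r : Row) : ℤ := r.A + r.B + 1

/-- `b(r) = A - B + 1`. -/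
def Row.b (r : Row) : ℤ := r.A - r.B + 1

/-- `C(r) = b(r) - 2l(r)`, the number of circles of `r`. -/
def Row.C (r : Row) : ℤ := r.b - 2 * r.l

/-- The defining constraints on a row: `B ≤ A` and `η ∈ {1, -1}`. -/
def IsRow (r : Row) : Prop := r.B ≤ r.A ∧ (r.eta = 1 ∨ r.eta = -1)

/-- `C(E) = Σ_j C(r_j)` for a sequence of rows `E`. -/
def CE (E : List Row) : ℤ := (E.map Row.C).sum

/-- `α_i = Σ_{j < i} a(r_j)` (the list `E` is 0-indexed here). -/
def alphaSum (E : List Row) (i : ℕ) : ℤ := ((E.take i).map Row.a).sum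

/-- `β_i = Σ_{j > i} b(r_j)` (the list `E` is 0-indexed here). -/
def betaSum (E : List Row) (i : ℕ) : ℤ := ((E.drop (i + 1)).map Row.b).sum

/-- The dual `r̂_i = (A_i, −B_i, l_i + B_i, (−1)^{α_i+β_i} η_i)` of the `i`-th
row of `E`. -/
def dualRow (E : List Row) (i : ℕ) : Row :=
  let r := E.getD i default
  ⟨r.A, -r.B, r.l + r.B, epow (alphaSum E i + betaSum E i) * r.eta⟩

/-- The dual sequence `dual(E) = (r̂_n, …, r̂_1)`. -/
def dualList (E : List Row) : List Row :=
  ((List.range E.length).map (dualRow E)).reverse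

theorem epow_even {n : ℤ} (h : n % 2 = 0) : epow n = 1 := by
  unfold epow
  exact Even.neg_one_pow (by rw [Int.natAbs_even]; exact Int.even_iff.mpr h)

theorem epow_odd {n : ℤ} (h : n % 2 = 1) : epow n = -1 := by
  unfold epow
  exact Odd.neg_one_pow (by rw [Int.natAbs_odd]; exact Int.odd_iff.mpr h)

theorem epow_add (m n : ℤ) : epow (m + n) = epow m * epow n := by
  rcases Int.emod_two_eq_zero_or_one m with h | h <;>
  rcases Int.emod_two_eq_zero_or_one n with h' | h'
  · rw [epow_even h, epow_even h', epow_even (by omega)]; rfl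
  · rw [epow_even h, epow_odd h', epow_odd (by omega)]; rfl
  · rw [epow_odd h, epow_even h', epow_odd (by omega)]; rfl
  · rw [epow_odd h, epow_odd h', epow_even (by omega)]; rfl

theorem epow_congr {m n : ℤ} (h : m % 2 = n % 2) : epow m = epow n := by
  rcases Int.emod_two_eq_zero_or_one m with h1 | h1
  · rw [epow_even h1, epow_even (by omega)]
  · rw [epow_odd h1, epow_odd (by omega)]

def hatRow (s : ℤ) (r : Row) : Row := ⟨r.A, -r.B, r.l + r.B, epow s * r.eta⟩

def sa (E : List Row) : ℤ := (E.map Row.a).sum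
def sb (E : List Row) : ℤ := (E.map Row.b).sum

def dl : ℤ → List Row → List Row
  | _, [] => []
  | s, r :: E => dl (s + r.a) E ++ [hatRow (s + sb E) r]

theorem sa_append (E F : List Row) : sa (E ++ F) = sa E + sa F := by simp [sa]
theorem sb_append (E F : List Row) : sb (E ++ F) = sb E + sb F := by simp [sb]
theorem sa_cons (r : Row) (F : List Row) : sa (r :: F) = r.a + sa F := by simp [sa]
theorem sb_cons (r : Row) (F : List Row) : sb (r :: F) = r.b + sb F := by simp [sb]
theorem sa_nil : sa [] = 0 := rfl
theorem sb_nil : sb [] = 0 := rfl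

theorem dl_length (E : List Row) : ∀ s, (dl s E).length = E.length := by
  induction E with
  | nil => intro s; rfl
  | cons r E ih => intro s; simp [dl, ih]

theorem dl_gen (E : List Row) : ∀ s, dl s E = ((List.range E.length).map
    (fun i => hatRow (s + (alphaSum E i + betaSum E i)) (E.getD i default))).reverse := by
  induction E with
  | nil => intro s; rfl
  | cons r E ih =>
    intro s
    rw [dl, ih, List.length_cons, List.range_succ_eq_map]
    simp only [List.map_cons, List.reverse_cons, List.map_map]
    congr 1
    · congr 1
      apply List.map_congr_left
      intro i _
      simp [alphaSum, betaSum, Function.comp, add_assoc]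
    · simp [alphaSum, betaSum, sb]

theorem dualList_eq (E : List Row) : dualList E = dl 0 E := by
  rw [dl_gen]
  unfold dualList
  congr 1
  apply List.map_congr_left
  intro i _
  simp [dualRow, hatRow]

theorem dl_congr (E : List Row) : ∀ s t : ℤ, s % 2 = t % 2 → dl s E = dl t E := by
  induction E with
  | nil => intros; rfl
  | cons r E ih =>
    intro s t h
    rw [dl, dl, ih (s + r.a) (t + r.a) (by omega), hatRow, hatRow,
      epow_congr (m := s + sb E) (n := t + sb E) (by omega)]

theorem dl_append (E F : List Row) : ∀ s, dl s (E ++ F) = dl (s + sa E) F ++ dl (s + sb F) E := by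
  induction E with
  | nil => intro s; simp [dl, sa]
  | cons r E ih =>
    intro s
    simp only [List.cons_append, dl, ih, List.append_assoc, sb_append, sa_cons]
    rw [show s + r.a + sa E = s + (r.a + sa E) by ring,
      show s + r.a + sb F = s + sb F + r.a by ring,
      show s + (sb E + sb F) = s + sb F + sb E by ring]

theorem sa_dl (E : List Row) : ∀ s, sa (dl s E) = sb E := by
  induction E with
  | nil => intro s; rfl
  | cons r E ih =>
    intro s
    rw [dl, sa_append, ih, sb_cons, sa_cons, sa_nil]
    simp only [hatRow, Row.a, Row.b]; ring

theorem sb_dl (E : List Row) : ∀ s, sb (dl s E) = sa E := by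
  induction E with
  | nil => intro s; rfl
  | cons r E ih =>
    intro s
    rw [dl, sb_append, ih, sa_cons, sb_cons, sb_nil]
    simp only [hatRow, Row.a, Row.b]; ring

theorem dl_dl (E : List Row) : ∀ s t : ℤ, (s + t) % 2 = 0 → dl t (dl s E) = E := by
  induction E with
  | nil => intros; rfl
  | cons r E ih =>
    intro s t h
    rw [dl, dl_append, ih, sa_dl, dl, dl]
    · simp only [hatRow, sb_nil, neg_neg, List.nil_append, List.singleton_append,
        ← mul_assoc, ← epow_add]
      rw [epow_even (by omega)]
      simp
    · simp only [sb_cons, sb_nil, hatRow, Row.a, Row.b]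
      omega

/-- Merging hats (Lemma `merge`): suppose the `B`-coordinates of `E` are
nondecreasing and that `r_i = h₁ = (A, −B, B, η)` and
`r_{i+1} = h₂ = (A', −B', B', η')` are consecutive hats with `B' ≥ 0`,
`C(h₁) ≥ 1`, `C(h₂) ≥ 1`, `A' = B − 1`, satisfying the alternating sign
condition `η' = (−1)^{C(h₁)} η`.  Then:
(a) in `dual(E)` the rows `r̂_{i+1}` and `r̂_i` are consecutive (in that
order), both have `l = 0`, their supports are `[B', A']` and `[B, A]`
respectively, and the union-intersection of type 3' is applicable to this pair;
(b) applying this union-intersection to `dual(E)` and dualizing the result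
yields exactly the sequence obtained from `E` by replacing the pair `(h₁, h₂)`
with the single hat `h = (A, −B', B', η)`, every other row being unchanged. -/
theorem merge_hats (E : List Row) (hE : ∀ r ∈ E, IsRow r)
    (hmono : E.Pairwise fun r s => r.B ≤ s.B)
    (i : ℕ) (hi : i + 1 < E.length)
    (A B A' B' η η' : ℤ)
    (hh₁ : E.get ⟨i, by omega⟩ = ⟨A, -B, B, η⟩)
    (hh₂ : E.get ⟨i + 1, hi⟩ = ⟨A', -B', B', η'⟩)
    (hB' : 0 ≤ B')
    (hC₁ : 1 ≤ Row.C ⟨A, -B, B, η⟩)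
    (hC₂ : 1 ≤ Row.C ⟨A', -B', B', η'⟩)
    (hadj : A' = B - 1)
    (halt : η' = epow (Row.C ⟨A, -B, B, η⟩) * η) :
    -- (a)
    ((dualList E).getD (E.length - i - 2) default = dualRow E (i + 1) ∧
     (dualList E).getD (E.length - i - 1) default = dualRow E i ∧
     (dualRow E (i + 1)).l = 0 ∧ (dualRow E i).l = 0 ∧
     (dualRow E (i + 1)).B = B' ∧ (dualRow E (i + 1)).A = A' ∧
     (dualRow E i).B = B ∧ (dualRow E i).A = A ∧
     (dualRow E (i + 1)).A < (dualRow E i).A ∧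
     (dualRow E (i + 1)).B < (dualRow E i).B ∧
     epow ((dualRow E (i + 1)).A - (dualRow E (i + 1)).B) *
       (dualRow E (i + 1)).eta * (dualRow E i).eta = -1 ∧
     (dualRow E i).B = (dualRow E (i + 1)).A + 1) ∧
    -- (b)
    (dualList
        ((dualList E).take (E.length - i - 2) ++
          [(⟨(dualRow E i).A, (dualRow E (i + 1)).B, 0,
              (dualRow E (i + 1)).eta⟩ : Row)] ++
          (dualList E).drop (E.length - i)) =
      E.take i ++ [(⟨A, -B', B', η⟩ : Row)] ++ E.drop (i + 2)) := by
  have hi0 : i < E.length := by omega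
  obtain ⟨P, Q, hPQ, hP⟩ : ∃ P Q : List Row,
      E = P ++ (⟨A, -B, B, η⟩ :: ⟨A', -B', B', η'⟩ :: Q) ∧ P.length = i := by
    refine ⟨E.take i, E.drop (i + 2), ?_, by simp; omega⟩
    rw [← hh₁, ← hh₂]
    simp only [List.get_eq_getElem]
    rw [List.getElem_cons_drop, List.getElem_cons_drop, List.take_append_drop]
  clear hh₁ hh₂
  have hη : η = 1 ∨ η = -1 := (hE ⟨A, -B, B, η⟩ (by rw [hPQ]; simp)).2
  simp only [Row.C, Row.b] at hC₁ hC₂ halt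
  have hd1 : dualRow E i = hatRow (sa P + (A' + B' + 1 + sb Q)) ⟨A, -B, B, η⟩ := by
    subst hPQ hP
    simp [dualRow, hatRow, alphaSum, betaSum, sa, sb, Row.b]
  have hd2 : dualRow E (i + 1) =
      hatRow (sa P + (A - B + 1) + sb Q) ⟨A', -B', B', η'⟩ := by
    subst hPQ hP
    simp [dualRow, hatRow, alphaSum, betaSum, sa, sb, Row.a, List.take_append, sub_eq_add_neg,
      List.take_of_length_le]
  have hlen : E.length = P.length + 2 + Q.length := by
    rw [hPQ]; simp; omega
  have hdual : dualList E = dl (sa P + (A - B' + 1)) Q ++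
      ([dualRow E (i + 1), dualRow E i] ++ dl (A + B' + 1 + sb Q) P) := by
    rw [dualList_eq, hd1, hd2]
    conv_lhs => rw [hPQ]
    rw [dl_append, dl, dl]
    simp only [List.append_assoc, List.cons_append, List.nil_append, sb_cons, Row.a, Row.b]
    congr 1
    · apply dl_congr; omega
    · congr 1
      · congr 1; ring
      · congr 1
        · congr 1; ring
        · apply dl_congr; omega
  have hlQ := dl_length Q (sa P + (A - B' + 1))
  have e1 : E.length - i - 2 = (dl (sa P + (A - B' + 1)) Q).length := by omega
  have e2 : E.length - i - 1 = (dl (sa P + (A - B' + 1)) Q).length + 1 := by omega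
  have e3 : E.length - i = (dl (sa P + (A - B' + 1)) Q).length + 2 := by omega
  refine ⟨⟨?_, ?_, ?_⟩, ?_⟩
  · rw [e1, hdual]; simp
  · rw [e2, hdual]; simp
  · rw [hd1, hd2]
    simp only [hatRow]
    refine ⟨by ring, by ring, by ring, trivial, by ring, trivial, by omega, by omega, ?_, by omega⟩
    have hsq : η * η = 1 := by rcases hη with h | h <;> simp [h]
    rw [halt]
    calc _ = epow ((A' - - -B') + (sa P + (A - B + 1) + sb Q) + (A - -B + 1 - 2 * B) +
            (sa P + (A' + B' + 1 + sb Q))) * (η * η) := by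
          simp only [epow_add]; ring
      _ = -1 := by rw [epow_odd (by omega), hsq]; rfl
  · have ht : (dualList E).take (E.length - i - 2) = dl (sa P + (A - B' + 1)) Q := by
      rw [e1, hdual]; simp
    have hdr : (dualList E).drop (E.length - i) = dl (A + B' + 1 + sb Q) P := by
      rw [e3, hdual]; simp [List.drop_append]
    have hEt : E.take i = P := by rw [hPQ, ← hP]; simp
    have hEd : E.drop (i + 2) = Q := by rw [hPQ, ← hP]; simp [List.drop_append]
    rw [ht, hdr, hEt, hEd, dualList_eq, dl_append, dl_append, dl_dl, dl_dl, hd1, hd2]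
    · simp only [dl, hatRow, List.nil_append, List.append_assoc, sa_dl, sb_dl, sb_nil]
      congr 3
      rw [halt]
      congr 1
      · ring
      · ring
      · rw [← mul_assoc, ← mul_assoc, ← epow_add, ← epow_add, epow_even (by omega), one_mul]
    · rw [hd1, hd2]
      simp only [sb_dl, sb_cons, sb_nil, hatRow, Row.b]
      omega
    · rw [hd1, hd2]
      simp only [sa_dl, sa_append, sa_cons, sa_nil, hatRow, Row.a]
      omega
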